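/- Let $f \in W^{1,1}((0,T)) \cap C([0,T])$ attain its minimum over $[0,T]$ at a point $t_0 \in (0,T]$. Then the Riemann-Liouville fractional derivative of order $\alpha \in (0,1)$ of $f(\cdot) - f(0)$ is nonpositive at $t_0$: $\partial_t^\alpha (f - f(0))(t_0) \leq 0$. -/

import Mathlib

open MeasureTheory Set

noncomputable section

/-- Riemann–Liouville fractional derivative of order `α`:
`∂_t^α v (t) = d/dt ∫_0^t (t-s)^{-α}/Γ(1-α) · v(s) ds`. -/
def riemannLiouville (α : ℝ) (v : ℝ → ℝ) (t : ℝ) : ℝ :=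
  deriv (fun τ => ∫ s in Set.Ioc 0 τ, (τ - s) ^ (-α) / Real.Gamma (1 - α) * v s) t

/-!
Put `p u = f (t₀ - u) - f t₀`, so that `p ≥ 0` and `p 0 = 0`, and
`J h = ∫ u in h..b, (u - h) ^ (-α) * p u`. For `b = t₀` and up to the factor `1 / Γ (1 - α)`, the
difference quotient from the left at `t₀` of the fractional integral of `f - f 0` is
`(J 0 - J h) / h` plus the contribution of the constant `f t₀ - f 0 ≤ 0`, which is nonpositive.
Shrinking `b` only increases `J 0 - J h`, because `(u - h) ^ (-α)` increases with `h`. So if the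
derivative were positive, there would be `b, δ > 0` with `δ * h ≤ J 0 - J h` on `(0, b)`. But
Marchaud's formula inverts the Abel integral, expressing `p 0 = 0` as a positive multiple of
`J 0 * b ^ (α - 1) + (1 - α) * ∫ h in 0..b, h ^ (α - 2) * (J 0 - J h)`, which would be positive.
Since that integral is singular at `0`, we cut it off at `η > 0`: it stays above a positive
constant, while Fubini's theorem bounds it by `1 / (1 - α)` times the integral of `p (η * w)`
against the integrable weight `w ^ (-α)` on `(0, 1)`, `w ^ (-α - 1)` on `(1, ∞)`, which tends to `0`
with `η`.
-/

open Filter Topology Function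

/-- The Riemann–Liouville fractional integral of order `1 - α`, whose derivative is
`riemannLiouville α v`. -/
def rlIntegral (α : ℝ) (v : ℝ → ℝ) (t : ℝ) : ℝ :=
  ∫ s in Ioc 0 t, (t - s) ^ (-α) / Real.Gamma (1 - α) * v s

/-- The right-sided fractional integral of order `1 - α` on `[h, b]`, without the factor
`1 / Γ(1 - α)`. In the reflected variable `u = t - s` it is the left-sided one, see
`rlIntegral_sub`. -/
def rightAbelIntegral (α b : ℝ) (p : ℝ → ℝ) (h : ℝ) : ℝ :=
  ∫ u in h..b, (u - h) ^ (-α) * p u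

section Triangle

variable {E : Type*} [NormedAddCommGroup E] {a b : ℝ} {g : ℝ → ℝ → E}

lemma setIntegral_Ioc_indicator_Ioi [NormedSpace ℝ E] {f : ℝ → E} {x : ℝ} (hx : x ∈ Icc a b) :
    ∫ y in Ioc a b, (Ioi x).indicator f y = ∫ y in x..b, f y := by
  rw [setIntegral_indicator measurableSet_Ioi, Ioc_inter_Ioi, max_eq_right hx.1,
    intervalIntegral.integral_of_le hx.2]

lemma setIntegral_Ioc_indicator_Iio [NormedSpace ℝ E] {f : ℝ → E} {y : ℝ} (hy : y ∈ Icc a b) :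
    ∫ x in Ioc a b, (Iio y).indicator f x = ∫ x in a..y, f x := by
  have hset : Ioc a b ∩ Iio y = Ioo a y := by
    ext x
    simp only [mem_inter_iff, mem_Ioc, mem_Iio, mem_Ioo]
    exact ⟨fun h => ⟨h.1.1, h.2⟩, fun h => ⟨⟨h.1, h.2.le.trans hy.2⟩, h.2⟩⟩
  rw [setIntegral_indicator measurableSet_Iio, hset, ← integral_Ioc_eq_integral_Ioo,
    intervalIntegral.integral_of_le hy.1]

lemma integrable_indicator_triangle
    (hmeas : AEStronglyMeasurable (uncurry g)
      ((volume.restrict (Ioc a b)).prod (volume.restrict (Ioc a b))))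
    (hsection : ∀ y ∈ Ioc a b, IntervalIntegrable (g · y) volume a y)
    (hnorm : IntegrableOn (fun y => ∫ x in a..y, ‖g x y‖) (Ioc a b)) :
    Integrable ({z : ℝ × ℝ | z.1 < z.2}.indicator (uncurry g))
      ((volume.restrict (Ioc a b)).prod (volume.restrict (Ioc a b))) := by
  have hsec (y : ℝ) : (fun x => {z : ℝ × ℝ | z.1 < z.2}.indicator (uncurry g) (x, y)) =
      (Iio y).indicator (g · y) := rfl
  rw [integrable_prod_iff' (hmeas.indicator (measurableSet_lt measurable_fst measurable_snd))]
  refine ⟨(ae_restrict_mem measurableSet_Ioc).mono fun y hy => ?_,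
    hnorm.congr_fun (fun y hy => ?_) measurableSet_Ioc⟩
  · rw [hsec, integrable_indicator_iff measurableSet_Iio, IntegrableOn,
      Measure.restrict_restrict measurableSet_Iio]
    exact (hsection y hy).1.mono_set fun x hx => ⟨hx.2.1, (mem_Iio.1 hx.1).le⟩
  · simp_rw [norm_indicator_eq_indicator_norm]
    exact (setIntegral_Ioc_indicator_Iio (f := fun x => ‖g x y‖) ⟨hy.1.le, hy.2⟩).symm

variable [NormedSpace ℝ E]

theorem intervalIntegrable_integral_triangle (hab : a ≤ b)
    (hg : Integrable ({z : ℝ × ℝ | z.1 < z.2}.indicator (uncurry g))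
      ((volume.restrict (Ioc a b)).prod (volume.restrict (Ioc a b)))) :
    IntervalIntegrable (fun x => ∫ y in x..b, g x y) volume a b := by
  rw [intervalIntegrable_iff_integrableOn_Ioc_of_le hab]
  exact IntegrableOn.congr_fun hg.integral_prod_left
    (fun x hx => setIntegral_Ioc_indicator_Ioi ⟨hx.1.le, hx.2⟩) measurableSet_Ioc

theorem integral_integral_triangle_swap (hab : a ≤ b)
    (hg : Integrable ({z : ℝ × ℝ | z.1 < z.2}.indicator (uncurry g))
      ((volume.restrict (Ioc a b)).prod (volume.restrict (Ioc a b)))) :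
    ∫ x in a..b, ∫ y in x..b, g x y = ∫ y in a..b, ∫ x in a..y, g x y := by
  have hrow : ∀ x ∈ Ioc a b, ∫ y in Ioc a b, {z : ℝ × ℝ | z.1 < z.2}.indicator (uncurry g) (x, y) =
      ∫ y in x..b, g x y := fun x hx => setIntegral_Ioc_indicator_Ioi ⟨hx.1.le, hx.2⟩
  have hcol : ∀ y ∈ Ioc a b, ∫ x in Ioc a b, {z : ℝ × ℝ | z.1 < z.2}.indicator (uncurry g) (x, y) =
      ∫ x in a..y, g x y := fun y hy => setIntegral_Ioc_indicator_Iio ⟨hy.1.le, hy.2⟩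
  rw [intervalIntegral.integral_of_le hab, intervalIntegral.integral_of_le hab,
    ← setIntegral_congr_fun measurableSet_Ioc hrow, ← setIntegral_congr_fun measurableSet_Ioc hcol]
  exact integral_integral_swap hg

end Triangle

section Kernel

variable {α η u : ℝ}

lemma intervalIntegrable_rpow_mul_sub_rpow (hα : α < 1) (hη : 0 < η) (hu : η ≤ u) :
    IntervalIntegrable (fun h => h ^ (α - 2) * (u - h) ^ (-α)) volume η u := by
  have hpos : ∀ h ∈ uIcc η u, h ≠ 0 := fun h hh => (hη.trans_le (uIcc_of_le hu ▸ hh).1).ne'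
  have hsing : IntervalIntegrable (fun h : ℝ => (u - h) ^ (-α)) volume η u := by
    simpa using (intervalIntegral.intervalIntegrable_rpow' (a := u - η) (b := u - u)
      (neg_lt_neg hα)).comp_sub_left u
  exact hsing.continuousOn_mul (continuousOn_id.rpow_const fun h hh => .inl (hpos h hh))

lemma hasDerivAt_sub_rpow_mul_rpow {h : ℝ} (hα : α ≠ 1) (hh : 0 < h) (hu : h < u) :
    HasDerivAt (fun h => -((u - h) ^ (1 - α) * h ^ (α - 1)) / ((1 - α) * u))
      (h ^ (α - 2) * (u - h) ^ (-α)) h := by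
  have huh : 0 < u - h := sub_pos.2 hu
  have hd : HasDerivAt (fun h : ℝ => (u - h) ^ (1 - α)) (-1 * (1 - α) * (u - h) ^ (1 - α - 1)) h :=
    ((hasDerivAt_id h).const_sub u).rpow_const (.inl huh.ne')
  have hd' : HasDerivAt (fun h : ℝ => h ^ (α - 1)) (1 * (α - 1) * h ^ (α - 1 - 1)) h :=
    (hasDerivAt_id h).rpow_const (.inl hh.ne')
  refine ((hd.mul hd').neg.div_const ((1 - α) * u)).congr_deriv ?_
  have hexp : -α + 1 ≠ 0 := fun h0 => hα (by linarith)
  have hu0 : u ≠ 0 := (hh.trans hu).ne'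
  rw [show 1 - α - 1 = -α by ring, show α - 1 - 1 = α - 2 by ring,
    show 1 - α = -α + 1 by ring, show α - 1 = α - 2 + 1 by ring,
    Real.rpow_add_one huh.ne', Real.rpow_add_one hh.ne']
  field_simp
  ring

lemma integral_rpow_mul_sub_rpow (hα : α < 1) (hη : 0 < η) (hu : η ≤ u) :
    ∫ h in η..u, h ^ (α - 2) * (u - h) ^ (-α) =
      η ^ (α - 1) / (1 - α) * ((u - η) ^ (1 - α) / u) := by
  have hα' : 0 < 1 - α := sub_pos.2 hα
  have hcont : ContinuousOn (fun h => -((u - h) ^ (1 - α) * h ^ (α - 1)) / ((1 - α) * u))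
      (Icc η u) := by
    refine .div_const (.neg (.mul ?_ ?_)) _
    · exact (continuousOn_const.sub continuousOn_id).rpow_const fun _ _ => .inr hα'.le
    · exact continuousOn_id.rpow_const fun h hh => .inl (hη.trans_le hh.1).ne'
  rw [intervalIntegral.integral_eq_sub_of_hasDerivAt_of_le hu hcont
    (fun h hh => hasDerivAt_sub_rpow_mul_rpow hα.ne (hη.trans hh.1) hh.2)
    (intervalIntegrable_rpow_mul_sub_rpow hα hη hu), sub_self, Real.zero_rpow hα'.ne']
  field_simp
  ring

lemma rpow_neg_sub_rpow_div_le (hα : 0 ≤ α) (hη : 0 < η) (hu : η ≤ u) :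
    u ^ (-α) - (u - η) ^ (1 - α) / u ≤ η * u ^ (-α - 1) := by
  have hu0 : 0 < u := hη.trans_le hu
  have hshift : (u - η) * u ^ (-α) ≤ (u - η) ^ (1 - α) := by
    rcases hu.eq_or_lt with rfl | hlt
    · simpa using Real.rpow_nonneg le_rfl _
    · have huη : 0 < u - η := sub_pos.2 hlt
      rw [show 1 - α = -α + 1 by ring, Real.rpow_add_one huη.ne', mul_comm]
      exact mul_le_mul_of_nonneg_right
        (Real.rpow_le_rpow_of_nonpos huη (sub_le_self u hη.le) (neg_nonpos.2 hα)) huη.le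
  rw [Real.rpow_sub_one hu0.ne', ← mul_div_assoc, sub_le_iff_le_add, ← add_div, le_div_iff₀ hu0]
  linarith

end Kernel

section AbelIntegral

variable {α b : ℝ} {p : ℝ → ℝ}

lemma intervalIntegrable_sub_rpow_mul {x y h : ℝ} (hα : α < 1) (hp : ContinuousOn p (uIcc x y)) :
    IntervalIntegrable (fun u => (u - h) ^ (-α) * p u) volume x y := by
  have hpow : IntervalIntegrable (fun u : ℝ => (u - h) ^ (-α)) volume x y := by
    simpa using (intervalIntegral.intervalIntegrable_rpow' (a := x - h) (b := y - h)
      (neg_lt_neg hα)).comp_sub_right h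
  exact hpow.mul_continuousOn hp

lemma rightAbelIntegral_add_const {h : ℝ} (hα : α < 1) (hp : ContinuousOn p (uIcc h b)) (c : ℝ) :
    rightAbelIntegral α b (fun u => p u + c) h =
      rightAbelIntegral α b p h + (b - h) ^ (1 - α) / (1 - α) * c := by
  have hconst : ∫ u in h..b, (u - h) ^ (-α) * c = (b - h) ^ (1 - α) / (1 - α) * c := by
    rw [intervalIntegral.integral_mul_const,
      intervalIntegral.integral_comp_sub_right (fun u : ℝ => u ^ (-α)) h,
      integral_rpow (.inl (neg_lt_neg hα)), sub_self, show -α + 1 = 1 - α by ring,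
      Real.zero_rpow (sub_pos.2 hα).ne', sub_zero]
  simp only [rightAbelIntegral, mul_add]
  rw [intervalIntegral.integral_add (intervalIntegrable_sub_rpow_mul hα hp)
    (intervalIntegrable_sub_rpow_mul hα continuousOn_const), hconst]

lemma rightAbelIntegral_sub_le_of_le {ε h : ℝ} (hα : α ∈ Ico 0 1) (hh : h ∈ Ico 0 ε) (hεb : ε ≤ b)
    (hp : ContinuousOn p (Icc 0 b)) (hp0 : ∀ u ∈ Icc ε b, 0 ≤ p u) :
    rightAbelIntegral α b p 0 - rightAbelIntegral α b p h ≤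
      rightAbelIntegral α ε p 0 - rightAbelIntegral α ε p h := by
  have hint {k x y : ℝ} (hx : 0 ≤ x) (hxy : x ≤ y) (hy : y ≤ b) :
      IntervalIntegrable (fun u => (u - k) ^ (-α) * p u) volume x y :=
    intervalIntegrable_sub_rpow_mul hα.2 (hp.mono (uIcc_of_le hxy ▸ Icc_subset_Icc hx hy))
  have hε : 0 ≤ ε := hh.1.trans hh.2.le
  have htail : ∫ u in ε..b, (u - 0) ^ (-α) * p u ≤ ∫ u in ε..b, (u - h) ^ (-α) * p u := by
    refine intervalIntegral.integral_mono_on hεb (hint hε hεb le_rfl) (hint hε hεb le_rfl)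
      fun u hu => mul_le_mul_of_nonneg_right ?_ (hp0 u hu)
    exact Real.rpow_le_rpow_of_nonpos (sub_pos.2 (hh.2.trans_le hu.1))
      (sub_le_sub_left hh.1 u) (neg_nonpos.2 hα.1)
  simp only [rightAbelIntegral]
  rw [← intervalIntegral.integral_add_adjacent_intervals (hint le_rfl hε hεb) (hint hε hεb le_rfl),
    ← intervalIntegral.integral_add_adjacent_intervals (hint hh.1 hh.2.le hεb)
      (hint hε hεb le_rfl)]
  linarith

lemma rlIntegral_sub {t h : ℝ} (v : ℝ → ℝ) (hht : h ≤ t) :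
    rlIntegral α v (t - h) =
      (Real.Gamma (1 - α))⁻¹ * rightAbelIntegral α t (fun u => v (t - u)) h := by
  have hreflect := intervalIntegral.integral_comp_sub_left (a := h) (b := t)
    (fun s => (t - h - s) ^ (-α) * v s) t
  rw [sub_self, intervalIntegral.integral_of_le (sub_nonneg.2 hht)] at hreflect
  have hshift (u : ℝ) : t - h - (t - u) = u - h := by ring
  simp only [hshift] at hreflect
  rw [rlIntegral, rightAbelIntegral, hreflect, ← integral_const_mul]
  exact integral_congr_ae (.of_forall fun s => by ring)

lemma integrable_indicator_triangle_abel {η : ℝ} (hα : α < 1) (hη : 0 < η)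
    (hp : ContinuousOn p (Icc η b)) :
    Integrable ({z : ℝ × ℝ | z.1 < z.2}.indicator
        (uncurry fun h u => h ^ (α - 2) * ((u - h) ^ (-α) * p u)))
      ((volume.restrict (Ioc η b)).prod (volume.restrict (Ioc η b))) := by
  have hpm : AEStronglyMeasurable p (volume.restrict (Ioc η b)) :=
    (hp.mono Ioc_subset_Icc_self).aestronglyMeasurable measurableSet_Ioc
  have hkernel : Measurable fun z : ℝ × ℝ => z.1 ^ (α - 2) * (z.2 - z.1) ^ (-α) := by fun_prop
  refine integrable_indicator_triangle ?_ (fun u hu => ?_) ?_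
  · refine (hkernel.aestronglyMeasurable.mul hpm.comp_snd).congr (.of_forall fun z => ?_)
    exact mul_assoc _ _ _
  · simp only [← mul_assoc]
    exact (intervalIntegrable_rpow_mul_sub_rpow hα hη hu.1.le).mul_const _
  · have hcont : ContinuousOn
        (fun u => η ^ (α - 1) / (1 - α) * ((u - η) ^ (1 - α) / u) * ‖p u‖) (Icc η b) := by
      refine ContinuousOn.mul (.mul continuousOn_const (.div ?_ continuousOn_id ?_)) hp.norm
      · exact (continuousOn_id.sub continuousOn_const).rpow_const
          fun _ _ => .inr (sub_pos.2 hα).le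
      · exact fun u hu => (hη.trans_le hu.1).ne'
    refine (hcont.integrableOn_Icc.mono_set Ioc_subset_Icc_self).congr_fun (fun u hu => ?_)
      measurableSet_Ioc
    simp only
    rw [← integral_rpow_mul_sub_rpow hα hη hu.1.le, ← intervalIntegral.integral_mul_const]
    refine intervalIntegral.integral_congr fun h hh => ?_
    rw [uIcc_of_le hu.1.le] at hh
    simp only [norm_mul, mul_assoc,
      Real.norm_of_nonneg (Real.rpow_nonneg (hη.le.trans hh.1) _),
      Real.norm_of_nonneg (Real.rpow_nonneg (sub_nonneg.2 hh.2) _)]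

lemma intervalIntegrable_rpow_mul_rightAbelIntegral {η : ℝ} (hα : α < 1) (hη : 0 < η) (hηb : η ≤ b)
    (hp : ContinuousOn p (Icc η b)) :
    IntervalIntegrable (fun h => h ^ (α - 2) * rightAbelIntegral α b p h) volume η b := by
  simp only [rightAbelIntegral, ← intervalIntegral.integral_const_mul]
  exact intervalIntegrable_integral_triangle hηb (integrable_indicator_triangle_abel hα hη hp)

theorem integral_rpow_mul_rightAbelIntegral {η : ℝ} (hα : α < 1) (hη : 0 < η) (hηb : η ≤ b)
    (hp : ContinuousOn p (Icc η b)) :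
    ∫ h in η..b, h ^ (α - 2) * rightAbelIntegral α b p h =
      η ^ (α - 1) / (1 - α) * ∫ u in η..b, (u - η) ^ (1 - α) / u * p u := by
  simp only [rightAbelIntegral, ← intervalIntegral.integral_const_mul]
  rw [integral_integral_triangle_swap hηb (integrable_indicator_triangle_abel hα hη hp)]
  refine intervalIntegral.integral_congr fun u hu => ?_
  rw [uIcc_of_le hηb] at hu
  simp only [← mul_assoc]
  rw [intervalIntegral.integral_mul_const, integral_rpow_mul_sub_rpow hα hη hu.1]

lemma rightAbelIntegral_zero_sub_le {η : ℝ} (hα : α ∈ Ico 0 1) (hη : 0 < η) (hηb : η ≤ b)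
    (hp : ContinuousOn p (Icc 0 b)) (hp0 : ∀ u ∈ Icc 0 b, 0 ≤ p u) :
    rightAbelIntegral α b p 0 - ∫ u in η..b, (u - η) ^ (1 - α) / u * p u ≤
      (∫ u in 0..η, u ^ (-α) * p u) + η * ∫ u in η..b, u ^ (-α - 1) * p u := by
  have hint {x y : ℝ} (hx : 0 ≤ x) (hxy : x ≤ y) (hy : y ≤ b) :
      IntervalIntegrable (fun u => u ^ (-α) * p u) volume x y := by
    simpa using intervalIntegrable_sub_rpow_mul (h := 0) hα.2
      (hp.mono (uIcc_of_le hxy ▸ Icc_subset_Icc hx hy))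
  have hpη : ContinuousOn p (uIcc η b) := hp.mono (uIcc_of_le hηb ▸ Icc_subset_Icc_left hη.le)
  have hne : ∀ u ∈ uIcc η b, u ≠ 0 := fun u hu => (hη.trans_le (uIcc_of_le hηb ▸ hu).1).ne'
  have hshift : IntervalIntegrable (fun u => (u - η) ^ (1 - α) / u * p u) volume η b := by
    refine ContinuousOn.intervalIntegrable (.mul (.div ?_ continuousOn_id hne) hpη)
    exact (continuousOn_id.sub continuousOn_const).rpow_const
      fun _ _ => .inr (sub_pos.2 hα.2).le
  have htail : IntervalIntegrable (fun u => η * (u ^ (-α - 1) * p u)) volume η b :=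
    ContinuousOn.intervalIntegrable (continuousOn_const.mul
      ((continuousOn_id.rpow_const fun u hu => .inl (hne u hu)).mul hpη))
  have hmono := intervalIntegral.integral_mono_on hηb ((hint hη.le hηb le_rfl).sub hshift) htail
    fun u hu => by
      have := mul_le_mul_of_nonneg_right (rpow_neg_sub_rpow_div_le hα.1 hη hu.1)
        (hp0 u ⟨hη.le.trans hu.1, hu.2⟩)
      linarith
  rw [intervalIntegral.integral_sub (hint hη.le hηb le_rfl) hshift,
    intervalIntegral.integral_const_mul] at hmono
  simp only [rightAbelIntegral, sub_zero]
  rw [← intervalIntegral.integral_add_adjacent_intervals (hint le_rfl hη.le hηb)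
    (hint hη.le hηb le_rfl)]
  linarith

theorem integral_rpow_mul_sub_rightAbelIntegral {η : ℝ} (hα : α < 1) (hη : 0 < η) (hηb : η ≤ b)
    (hp : ContinuousOn p (Icc η b)) (c : ℝ) :
    ∫ h in η..b, h ^ (α - 2) * (c - rightAbelIntegral α b p h) =
      (η ^ (α - 1) * (c - ∫ u in η..b, (u - η) ^ (1 - α) / u * p u) - c * b ^ (α - 1)) /
        (1 - α) := by
  have h0 : (0 : ℝ) ∉ uIcc η b := fun h => hη.not_ge (uIcc_of_le hηb ▸ h).1
  have hexp : α - 1 ≠ 0 := (sub_neg.2 hα).ne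
  have hexp' : 1 - α ≠ 0 := (sub_pos.2 hα).ne'
  simp only [mul_sub]
  rw [intervalIntegral.integral_sub
      ((intervalIntegral.intervalIntegrable_rpow (.inr h0)).mul_const c)
      (intervalIntegrable_rpow_mul_rightAbelIntegral hα hη hηb hp),
    integral_rpow_mul_rightAbelIntegral hα hη hηb hp, intervalIntegral.integral_mul_const,
    integral_rpow (.inr ⟨by linarith, h0⟩), show α - 2 + 1 = α - 1 by ring]
  field_simp
  ring

theorem integral_rpow_mul_rightAbelIntegral_zero_sub_le {η : ℝ} (hα : α ∈ Ico 0 1) (hη : 0 < η)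
    (hηb : η ≤ b) (hp : ContinuousOn p (Icc 0 b)) (hp0 : ∀ u ∈ Icc 0 b, 0 ≤ p u) :
    ∫ h in η..b, h ^ (α - 2) * (rightAbelIntegral α b p 0 - rightAbelIntegral α b p h) ≤
      (η ^ (α - 1) * (∫ u in 0..η, u ^ (-α) * p u) + η ^ α * ∫ u in η..b, u ^ (-α - 1) * p u) /
        (1 - α) := by
  have hb : 0 ≤ b := hη.le.trans hηb
  have hJ0 : 0 ≤ rightAbelIntegral α b p 0 := intervalIntegral.integral_nonneg hb fun u hu =>
    mul_nonneg (Real.rpow_nonneg (sub_nonneg.2 hu.1) _) (hp0 u hu)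
  have hηα : η ^ α = η ^ (α - 1) * η := by rw [← Real.rpow_add_one hη.ne', sub_add_cancel]
  rw [integral_rpow_mul_sub_rightAbelIntegral hα.2 hη hηb (hp.mono (Icc_subset_Icc_left hη.le)),
    hηα, mul_assoc, ← mul_add]
  refine div_le_div_of_nonneg_right ((sub_le_self _ (by positivity)).trans ?_)
    (sub_nonneg.2 hα.2.le)
  gcongr
  exact rightAbelIntegral_zero_sub_le hα hη hηb hp hp0

theorem mul_rpow_sub_rpow_le_of_le_rightAbelIntegral_sub {η δ : ℝ} (hα : α ∈ Ioo 0 1) (hη : 0 < η)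
    (hηb : η ≤ b) (hp : ContinuousOn p (Icc 0 b)) (hp0 : ∀ u ∈ Icc 0 b, 0 ≤ p u)
    (hδ : ∀ h ∈ Ioo 0 b, δ * h ≤ rightAbelIntegral α b p 0 - rightAbelIntegral α b p h) :
    δ * ((b ^ α - η ^ α) / α) ≤
      (η ^ (α - 1) * (∫ u in 0..η, u ^ (-α) * p u) + η ^ α * ∫ u in η..b, u ^ (-α - 1) * p u) /
        (1 - α) := by
  have h0 : (0 : ℝ) ∉ uIcc η b := fun h => hη.not_ge (uIcc_of_le hηb ▸ h).1
  have hpow (r : ℝ) : IntervalIntegrable (fun h : ℝ => h ^ r) volume η b :=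
    intervalIntegral.intervalIntegrable_rpow (.inr h0)
  have hint : IntervalIntegrable (fun h => h ^ (α - 2) *
      (rightAbelIntegral α b p 0 - rightAbelIntegral α b p h)) volume η b := by
    simp only [mul_sub]
    exact ((hpow _).mul_const _).sub (intervalIntegrable_rpow_mul_rightAbelIntegral hα.2 hη hηb
      (hp.mono (Icc_subset_Icc_left hη.le)))
  calc δ * ((b ^ α - η ^ α) / α)
    _ = ∫ h in η..b, δ * h ^ (α - 1) := by
      rw [intervalIntegral.integral_const_mul, integral_rpow (.inr ⟨by linarith [hα.1], h0⟩),
        sub_add_cancel]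
    _ ≤ ∫ h in η..b, h ^ (α - 2) * (rightAbelIntegral α b p 0 - rightAbelIntegral α b p h) := by
      refine intervalIntegral.integral_mono_on_of_le_Ioo hηb ((hpow _).const_mul _) hint
        fun h hh => ?_
      have hh0 : 0 < h := hη.trans hh.1
      rw [show α - 1 = α - 2 + 1 by ring, Real.rpow_add_one hh0.ne', mul_left_comm]
      exact mul_le_mul_of_nonneg_left (hδ h ⟨hh0, hh.2⟩) (Real.rpow_nonneg hh0.le _)
    _ ≤ _ := integral_rpow_mul_rightAbelIntegral_zero_sub_le ⟨hα.1.le, hα.2⟩ hη hηb hp hp0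

end AbelIntegral

section Limits

variable {α M : ℝ} {p : ℝ → ℝ}

lemma continuous_integral_mul_comp_mul {μ : Measure ℝ} {k : ℝ → ℝ} (hk : Integrable k μ)
    (hp : Continuous p) (hM : ∀ u, |p u| ≤ M) :
    Continuous fun η => ∫ w, k w * p (η * w) ∂μ := by
  refine continuous_of_dominated (bound := fun w => ‖k w‖ * M) (fun η => ?_) (fun η => ?_)
    (hk.norm.mul_const M) (.of_forall fun w => by fun_prop)
  · exact hk.aestronglyMeasurable.mul (by fun_prop)
  · exact .of_forall fun w => by
      rw [norm_mul]
      exact mul_le_mul_of_nonneg_left (hM _) (norm_nonneg _)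

lemma integral_rpow_neg_mul_comp_mul {η : ℝ} (hη : 0 < η) (p : ℝ → ℝ) :
    ∫ w in 0..1, w ^ (-α) * p (η * w) = η ^ (α - 1) * ∫ u in 0..η, u ^ (-α) * p u := by
  have hscale := intervalIntegral.smul_integral_comp_mul_left (a := 0) (b := 1)
    (fun u => u ^ (-α) * p u) η
  rw [mul_zero, mul_one, smul_eq_mul] at hscale
  rw [← hscale, ← mul_assoc, ← Real.rpow_add_one hη.ne', sub_add_cancel,
    ← intervalIntegral.integral_const_mul]
  refine intervalIntegral.integral_congr fun w hw => ?_
  rw [uIcc_of_le zero_le_one] at hw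
  rw [Real.mul_rpow hη.le hw.1, ← mul_assoc, ← mul_assoc, ← Real.rpow_add hη, add_neg_cancel,
    Real.rpow_zero, one_mul]

lemma integral_Ioi_rpow_neg_sub_one_mul_comp_mul {η : ℝ} (hη : 0 < η) (p : ℝ → ℝ) :
    ∫ w in Ioi 1, w ^ (-α - 1) * p (η * w) = η ^ α * ∫ u in Ioi η, u ^ (-α - 1) * p u := by
  have hscale := integral_comp_mul_left_Ioi' (fun u => u ^ (-α - 1) * p u) 1 hη
  rw [mul_one, smul_eq_mul] at hscale
  rw [← hscale, ← mul_assoc, ← Real.rpow_add_one hη.ne', ← integral_const_mul]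
  refine setIntegral_congr_fun measurableSet_Ioi fun w hw => ?_
  rw [Real.mul_rpow hη.le (zero_le_one.trans (mem_Ioi.1 hw).le), ← mul_assoc, ← mul_assoc,
    ← Real.rpow_add hη, show α + 1 + (-α - 1) = 0 by ring, Real.rpow_zero, one_mul]

lemma tendsto_rpow_mul_integral_rpow_neg_mul (hα : α < 1) (hp : Continuous p)
    (hM : ∀ u, |p u| ≤ M) :
    Tendsto (fun η => η ^ (α - 1) * ∫ u in 0..η, u ^ (-α) * p u) (𝓝[>] 0) (𝓝 (p 0 / (1 - α))) := by
  have hk : IntegrableOn (fun w : ℝ => w ^ (-α)) (Ioc 0 1) :=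
    (intervalIntegral.intervalIntegrable_rpow' (neg_lt_neg hα)).1
  have hcont := continuous_integral_mul_comp_mul hk hp hM
  simp only [← intervalIntegral.integral_of_le zero_le_one] at hcont
  have hvalue : ∫ w in 0..1, w ^ (-α) * p (0 * w) = p 0 / (1 - α) := by
    simp only [zero_mul]
    rw [intervalIntegral.integral_mul_const, integral_rpow (.inl (neg_lt_neg hα)),
      show -α + 1 = 1 - α by ring, Real.zero_rpow (sub_pos.2 hα).ne', Real.one_rpow, sub_zero,
      one_div_mul_eq_div]
  refine ((hcont.tendsto' 0 _ hvalue).mono_left nhdsWithin_le_nhds).congr' ?_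
  filter_upwards [self_mem_nhdsWithin] with η (hη : 0 < η)
  exact integral_rpow_neg_mul_comp_mul hη p

lemma tendsto_rpow_mul_integral_Ioi_rpow_neg_sub_one_mul (hα : 0 < α) (hp : Continuous p)
    (hM : ∀ u, |p u| ≤ M) :
    Tendsto (fun η => η ^ α * ∫ u in Ioi η, u ^ (-α - 1) * p u) (𝓝[>] 0) (𝓝 (p 0 / α)) := by
  have hexp : -α - 1 < -1 := by linarith
  have hcont := continuous_integral_mul_comp_mul (integrableOn_Ioi_rpow_of_lt hexp one_pos) hp hM
  have hvalue : ∫ w in Ioi 1, w ^ (-α - 1) * p (0 * w) = p 0 / α := by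
    simp only [zero_mul]
    rw [integral_mul_const, integral_Ioi_rpow_of_lt hexp one_pos, Real.one_rpow, sub_add_cancel,
      neg_div_neg_eq, one_div_mul_eq_div]
  refine ((hcont.tendsto' 0 _ hvalue).mono_left nhdsWithin_le_nhds).congr' ?_
  filter_upwards [self_mem_nhdsWithin] with η (hη : 0 < η)
  exact integral_Ioi_rpow_neg_sub_one_mul_comp_mul hη p

end Limits

section Minimum

variable {α b δ : ℝ} {p : ℝ → ℝ}

lemma exists_rightAbelIntegral_sub_lt {M : ℝ} (hα : α ∈ Ioo 0 1) (hb : 0 < b) (hδ : 0 < δ)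
    (hp : Continuous p) (hM : ∀ u, |p u| ≤ M) (hp0 : ∀ u, 0 ≤ p u) (hpz : p 0 = 0) :
    ∃ h ∈ Ioo 0 b, rightAbelIntegral α b p 0 - rightAbelIntegral α b p h < δ * h := by
  by_contra! hcontra
  have hbound : ∀ᶠ η in 𝓝[>] 0, δ * ((b ^ α - η ^ α) / α) ≤
      (η ^ (α - 1) * (∫ u in 0..η, u ^ (-α) * p u) + η ^ α * ∫ u in Ioi η, u ^ (-α - 1) * p u) /
        (1 - α) := by
    filter_upwards [Ioo_mem_nhdsGT hb] with η ⟨hη, hηb⟩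
    refine (mul_rpow_sub_rpow_le_of_le_rightAbelIntegral_sub hα hη hηb.le hp.continuousOn
      (fun u _ => hp0 u) hcontra).trans ?_
    have hint : IntegrableOn (fun u => u ^ (-α - 1) * p u) (Ioi η) :=
      (integrableOn_Ioi_rpow_of_lt (by linarith [hα.1] : -α - 1 < -1) hη).mul_bdd
        hp.aestronglyMeasurable (.of_forall hM)
    have hα' : 0 ≤ 1 - α := sub_nonneg.2 hα.2.le
    rw [intervalIntegral.integral_of_le hηb.le]
    gcongr
    · exact ae_restrict_of_forall_mem measurableSet_Ioi fun u hu =>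
        mul_nonneg (Real.rpow_nonneg (hη.trans hu).le _) (hp0 u)
    · exact Ioc_subset_Ioi_self
  have hleft : Tendsto (fun η : ℝ => δ * ((b ^ α - η ^ α) / α)) (𝓝[>] 0)
      (𝓝 (δ * ((b ^ α - 0 ^ α) / α))) := by
    have := Real.continuous_rpow_const hα.1.le
    exact (Continuous.tendsto (by fun_prop) 0).mono_left nhdsWithin_le_nhds
  have hright := ((tendsto_rpow_mul_integral_rpow_neg_mul hα.2 hp hM).add
    (tendsto_rpow_mul_integral_Ioi_rpow_neg_sub_one_mul hα.1 hp hM)).div_const (1 - α)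
  have hle := le_of_tendsto_of_tendsto hleft hright hbound
  rw [Real.zero_rpow hα.1.ne', sub_zero, hpz, zero_div, zero_div, add_zero, zero_div] at hle
  exact hle.not_gt (mul_pos hδ (div_pos (Real.rpow_pos_of_pos hb α) hα.1))

theorem frequently_rightAbelIntegral_sub_lt (hα : α ∈ Ioo 0 1) (hb : 0 < b) (hδ : 0 < δ)
    (hp : ContinuousOn p (Icc 0 b)) (hp0 : ∀ u ∈ Icc 0 b, 0 ≤ p u) (hpz : p 0 = 0) :
    ∃ᶠ h in 𝓝[>] 0, rightAbelIntegral α b p 0 - rightAbelIntegral α b p h < δ * h := by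
  rw [(nhdsGT_basis_of_exists_gt ⟨b, hb⟩).frequently_iff]
  intro r hr
  set ε := min r b
  have hε : 0 < ε := lt_min hr hb
  have hεb : ε ≤ b := min_le_right r b
  let q : ℝ → ℝ := IccExtend hb.le ((Icc 0 b).domRestrict p)
  have hqp : EqOn q p (Icc 0 b) := fun u hu => IccExtend_of_mem hb.le _ hu
  obtain ⟨M, hM⟩ := isCompact_Icc.exists_bound_of_continuousOn hp
  obtain ⟨h, hh, hlt⟩ := exists_rightAbelIntegral_sub_lt (p := q) hα hε hδ
    hp.domRestrict.Icc_extend' (fun u => hM _ (projIcc 0 b hb.le u).2)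
    (fun u => hp0 _ (projIcc 0 b hb.le u).2) ((hqp ⟨le_rfl, hb.le⟩).trans hpz)
  have hJ : ∀ k ∈ Icc 0 ε, rightAbelIntegral α ε q k = rightAbelIntegral α ε p k := fun k hk =>
    intervalIntegral.integral_congr fun u hu => by
      rw [uIcc_of_le hk.2] at hu
      simp only [hqp ⟨hk.1.trans hu.1, hu.2.trans hεb⟩]
  rw [hJ 0 ⟨le_rfl, hε.le⟩, hJ h ⟨hh.1.le, hh.2.le⟩] at hlt
  exact ⟨h, ⟨hh.1, hh.2.trans_le (min_le_left r b)⟩,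
    (rightAbelIntegral_sub_le_of_le ⟨hα.1.le, hα.2⟩ ⟨hh.1.le, hh.2⟩ hεb hp
      fun u hu => hp0 u ⟨hε.le.trans hu.1, hu.2⟩).trans_lt hlt⟩

theorem frequently_rlIntegral_sub_lt {v : ℝ → ℝ} {t : ℝ} (hα : α ∈ Ioo 0 1) (ht : 0 < t)
    (hδ : 0 < δ) (hv : ContinuousOn v (Icc 0 t)) (hmin : ∀ s ∈ Icc 0 t, v t ≤ v s)
    (hvt : v t ≤ 0) :
    ∃ᶠ h in 𝓝[>] 0, rlIntegral α v t - rlIntegral α v (t - h) < δ * h := by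
  have hα' : 0 < 1 - α := sub_pos.2 hα.2
  have hΓ : 0 < Real.Gamma (1 - α) := Real.Gamma_pos_of_pos hα'
  have hmaps : MapsTo (fun u => t - u) (Icc 0 t) (Icc 0 t) := fun u hu =>
    ⟨sub_nonneg.2 hu.2, sub_le_self t hu.1⟩
  set p : ℝ → ℝ := fun u => v (t - u) - v t
  have hp : ContinuousOn p (Icc 0 t) := (hv.comp (by fun_prop) hmaps).sub continuousOn_const
  have hJ : ∀ h ∈ Icc 0 t, rlIntegral α v (t - h) = (Real.Gamma (1 - α))⁻¹ *
      (rightAbelIntegral α t p h + (t - h) ^ (1 - α) / (1 - α) * v t) := fun h hh => by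
    have hpv : (fun u => v (t - u)) = fun u => p u + v t := by simp [p]
    rw [rlIntegral_sub v hh.2, hpv, rightAbelIntegral_add_const hα.2
      (hp.mono (uIcc_of_le hh.2 ▸ Icc_subset_Icc_left hh.1))]
  have hfreq := frequently_rightAbelIntegral_sub_lt hα ht (mul_pos hΓ hδ) hp
    (fun u hu => sub_nonneg.2 (hmin _ (hmaps hu))) (by simp [p])
  refine (hfreq.and_eventually (Ioo_mem_nhdsGT ht)).mono fun h ⟨hlt, hh⟩ => ?_
  have hconst : (t - 0) ^ (1 - α) / (1 - α) * v t ≤ (t - h) ^ (1 - α) / (1 - α) * v t := by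
    refine mul_le_mul_of_nonpos_right ?_ hvt
    gcongr
    exacts [sub_nonneg.2 hh.2.le, hh.1.le]
  have h0 := hJ 0 ⟨le_rfl, ht.le⟩
  rw [sub_zero] at h0
  rw [h0, hJ h ⟨hh.1.le, hh.2.le⟩, ← mul_sub, inv_mul_lt_iff₀ hΓ]
  rw [sub_zero] at hconst
  linarith only [hlt, hconst]

theorem hasDerivWithinAt_rlIntegral_nonpos {v : ℝ → ℝ} {t L : ℝ} (hα : α ∈ Ioo 0 1) (ht : 0 < t)
    (hv : ContinuousOn v (Icc 0 t)) (hmin : ∀ s ∈ Icc 0 t, v t ≤ v s) (hvt : v t ≤ 0)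
    (hL : HasDerivWithinAt (rlIntegral α v) L (Iio t) t) : L ≤ 0 := by
  refine le_of_forall_pos_le_add fun δ hδ => ?_
  rw [hasDerivWithinAt_iff_tendsto_slope' self_notMem_Iio] at hL
  have hreflect : Tendsto (fun h => t - h) (𝓝[>] 0) (𝓝[<] t) :=
    tendsto_nhdsWithin_iff.2
      ⟨((continuous_const.sub continuous_id).tendsto' 0 t (sub_zero t)).mono_left
        nhdsWithin_le_nhds, eventually_mem_nhdsWithin.mono fun h hh => sub_lt_self t hh⟩
  refine le_of_tendsto_of_frequently (hL.comp hreflect)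
    (((frequently_rlIntegral_sub_lt hα ht hδ hv hmin hvt).and_eventually
      eventually_mem_nhdsWithin).mono fun h ⟨hlt, (hh : 0 < h)⟩ => ?_)
  rw [zero_add, comp_apply, slope_comm, slope_def_field, sub_sub_cancel, div_le_iff₀ hh]
  exact hlt.le

theorem rl_deriv_nonpos_at_min_general {v : ℝ → ℝ} {t : ℝ} (hα : α ∈ Ioo 0 1) (ht : 0 < t)
    (hv : ContinuousOn v (Icc 0 t)) (hmin : ∀ s ∈ Icc 0 t, v t ≤ v s) (hvt : v t ≤ 0) :
    riemannLiouville α v t ≤ 0 := by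
  by_cases hd : DifferentiableAt ℝ (rlIntegral α v) t
  · exact hasDerivWithinAt_rlIntegral_nonpos hα ht hv hmin hvt hd.hasDerivAt.hasDerivWithinAt
  · exact (deriv_zero_of_not_differentiableAt hd).le

end Minimum

theorem rl_deriv_nonpos_at_min (T α : ℝ) (hT : 0 < T) (hα : α ∈ Ioo (0:ℝ) 1)
    (f f' : ℝ → ℝ)
    (hfc : ContinuousOn f (Icc 0 T))
    (hfderiv : ∀ t ∈ Ioo 0 T, HasDerivAt f (f' t) t)
    (hf'int : IntegrableOn f' (Ioc 0 T))
    (t0 : ℝ) (ht0 : t0 ∈ Ioc 0 T)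
    (hmin : ∀ s ∈ Icc 0 T, f t0 ≤ f s) :
    riemannLiouville α (fun t => f t - f 0) t0 ≤ 0 := by
  have hsub : Icc 0 t0 ⊆ Icc 0 T := Icc_subset_Icc_right ht0.2
  exact rl_deriv_nonpos_at_min_general hα ht0.1 ((hfc.mono hsub).sub continuousOn_const)
    (fun s hs => sub_le_sub_right (hmin s (hsub hs)) _)
    (sub_nonpos.2 (hmin 0 ⟨le_rfl, hT.le⟩))
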